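/- arXiv:1306.5696 — 2 statements merged into one kernel-verified Lean document; each statement's English description precedes it below -/
import Mathlib

section
/- For the elementary Nielsen automorphism φ (a ↦ ab, b ↦ b, c_j ↦ c_j) and any reduced word w such that w·b is reduced and w does not end in a⁻¹ (so that the displayed products are reduced), the image of the cylinder C¹_{w·b} under the boundary extension of φ equals the union C¹_{φ(w)·b} ∪ C¹_{φ(w)·a⁻¹}. -/
open FreeGroup

variable {α : Type*}

/-- Inverse of a letter `(x, b)` in the alphabet `A ∪ A⁻¹`. -/
def linv (x : α × Bool) : α × Bool := (x.1, !x.2)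

/-- The boundary `∂F(A)`: infinite reduced words over `A ∪ A⁻¹`. -/
def Bd (α : Type*) : Type _ := {ξ : ℕ → α × Bool // ∀ n, ξ (n + 1) ≠ linv (ξ n)}

/-- The cylinder `C¹_w` of all infinite reduced words with prefix `w`. -/
def Cyl (w : List (α × Bool)) : Set (Bd α) :=
  {ξ | ∀ i, (h : i < w.length) → ξ.1 i = w.get ⟨i, h⟩}

/-- The length-`m` prefix of an infinite reduced word. -/
def pre (ξ : Bd α) (m : ℕ) : List (α × Bool) := List.ofFn (fun i : Fin m => ξ.1 i)

/-- `Φ` is the boundary extension of the automorphism `φ`: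
for every `ξ ∈ ∂F(A)`, the reduced words `φ(ξ|_m)` converge to `Φ ξ`. -/
def ExtendsBd [DecidableEq α] (φ : FreeGroup α ≃* FreeGroup α) (Φ : Bd α → Bd α) : Prop :=
  ∀ ξ : Bd α, ∀ k : ℕ, ∃ n : ℕ, ∀ m, n ≤ m →
    ((φ (FreeGroup.mk (pre ξ m))).toWord).take k = List.ofFn (fun i : Fin k => (Φ ξ).1 i)

/-- `Concat g ξ η` : `η` is the reduced concatenation `g · ξ` (left translation of a
boundary point by a group element): some terminal segment of (the reduced word of) `g`
cancels against an initial segment of `ξ`, and `η` is the concatenation of the rest. -/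
def Concat [DecidableEq α] (g : FreeGroup α) (ξ η : Bd α) : Prop :=
  ∃ ℓ : ℕ, ∃ hℓ : ℓ ≤ g.toWord.length,
    (∀ i, (h : i < ℓ) → ξ.1 i = linv (g.toWord.get ⟨g.toWord.length - 1 - i, by omega⟩)) ∧
    (∀ n : ℕ, η.1 n =
      if h : n < g.toWord.length - ℓ then g.toWord.get ⟨n, by omega⟩
      else ξ.1 (n - (g.toWord.length - ℓ) + ℓ))

/-- The vertex `g` of the Cayley tree lies on the bi-infinite geodesic from `ξ` to `η`. -/
def OnGeod [DecidableEq α] (g : FreeGroup α) (ξ η : Bd α) : Prop :=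
  ∃ ξ' η' : Bd α, Concat g⁻¹ ξ ξ' ∧ Concat g⁻¹ η η' ∧ ξ'.1 0 ≠ η'.1 0

/-- The double cylinder `C²_{[v,w]}`. -/
def DblCyl [DecidableEq α] (v w : FreeGroup α) : Set (Bd α × Bd α) :=
  {p | p.1 ≠ p.2 ∧ OnGeod v p.1 p.2 ∧ OnGeod w p.1 p.2}

/-- Letter-permuting automorphism: every generator maps to a single letter. -/
def IsPermAut [DecidableEq α] (φ : FreeGroup α ≃* FreeGroup α) : Prop :=
  ∀ x : α, ((φ (FreeGroup.of x)).toWord).length = 1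

/-- Elementary Nielsen automorphism: `a ↦ ab`, all other generators fixed. -/
def IsNielsenAut (φ : FreeGroup α ≃* FreeGroup α) : Prop :=
  ∃ a b : α, a ≠ b ∧ φ (FreeGroup.of a) = FreeGroup.of a * FreeGroup.of b ∧
    ∀ x : α, x ≠ a → φ (FreeGroup.of x) = FreeGroup.of x


namespace NielsenAux

/-- Left multiplication of a reduced word by a letter. -/
def rc [DecidableEq α] (x : α × Bool) (L : List (α × Bool)) : List (α × Bool) :=
  if L.head? = some (linv x) then L.tail else x :: L

lemma toWord_letter_mul [DecidableEq α] (x : α × Bool) (g : FreeGroup α) :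
    (FreeGroup.mk [x] * g).toWord = rc x g.toWord := by
  rw [toWord_mul, toWord_mk, reduce_singleton, List.singleton_append, reduce.cons, reduce_toWord]
  unfold rc
  cases h : g.toWord with
  | nil => simp
  | cons y L =>
    rcases x with ⟨x, e⟩
    rcases y with ⟨y, d⟩
    simp only [linv, List.head?_cons, List.tail_cons, Option.some.injEq, Prod.mk.injEq]
    congr 1
    cases e <;> cases d <;> simp [eq_comm]

lemma rel_iff (x y : α × Bool) : (x.1 = y.1 → x.2 = y.2) ↔ y ≠ linv x := by
  rcases x with ⟨x, e⟩
  rcases y with ⟨y, d⟩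
  cases e <;> cases d <;> simp [linv, eq_comm]

lemma linv_linv (x : α × Bool) : linv (linv x) = x := by simp [linv]

lemma toWord_mk_red [DecidableEq α] {L : List (α × Bool)} (h : IsReduced L) :
    (FreeGroup.mk L).toWord = L := by rw [toWord_mk, h.reduce_eq]

lemma isReduced_append_iff {L M : List (α × Bool)} (hL : IsReduced L) (hM : IsReduced M) :
    IsReduced (L ++ M) ↔ ∀ x ∈ L.getLast?, ∀ y ∈ M.head?, y ≠ linv x := by
  unfold FreeGroup.IsReduced at *
  rw [List.isChain_append]
  simp only [rel_iff]
  simp only [rel_iff] at hL hM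
  simp [hL, hM]

lemma isReduced_cons_iff {x : α × Bool} {M : List (α × Bool)} :
    IsReduced (x :: M) ↔ M.head? ≠ some (linv x) ∧ IsReduced M := by
  cases M with
  | nil => simp
  | cons y M => rw [isReduced_cons_cons, rel_iff]; simp

lemma take_letter [DecidableEq α] (g : FreeGroup α) (x : α × Bool) (k : ℕ)
    (hk : k + 1 ≤ g.norm) :
    (g * FreeGroup.mk [x]).toWord.take k = g.toWord.take k := by
  unfold FreeGroup.norm at hk
  by_cases h : IsReduced (g.toWord ++ [x])
  · have : (g * FreeGroup.mk [x]).toWord = g.toWord ++ [x] := by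
      rw [toWord_mul, toWord_mk, reduce_singleton, h.reduce_eq]
    rw [this, List.take_append_of_le_length (by omega)]
  · rw [isReduced_append_iff isReduced_toWord IsReduced.singleton] at h
    push Not at h
    obtain ⟨y, hy, z, hz, hzy⟩ := h
    simp at hz
    subst hz
    obtain ⟨L, hL⟩ := List.getLast?_eq_some_iff.1 hy
    have hLr : IsReduced L := (isReduced_toWord (x := g)).infix ⟨[], [y], by simp [hL]⟩
    have : g * FreeGroup.mk [x] = FreeGroup.mk L := by
      rw [← mk_toWord (x := g), hL, mul_mk, hzy, List.append_assoc]
      apply Quot.sound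
      have := Red.Step.not (L₁ := L) (L₂ := []) (x := y.1) (b := y.2)
      simpa [linv] using this
    rw [this, toWord_mk_red hLr, hL, List.take_append_of_le_length]
    rw [hL] at hk
    simp at hk
    omega

lemma take_mul_mk [DecidableEq α] (L : List (α × Bool)) : ∀ (g : FreeGroup α) (k : ℕ),
    k + L.length ≤ g.norm → (g * FreeGroup.mk L).toWord.take k = g.toWord.take k := by
  induction L with
  | nil => intro g k _; rw [← one_eq_mk, mul_one]
  | cons x L ih =>
    intro g k hk
    simp only [List.length_cons] at hk
    have e : g * FreeGroup.mk (x :: L) = g * FreeGroup.mk [x] * FreeGroup.mk L := by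
      rw [mul_assoc, mul_mk]; rfl
    have hn : g.norm ≤ (g * FreeGroup.mk [x]).norm + 1 := by
      have h1 := norm_mul_le (g * FreeGroup.mk [x]) (FreeGroup.mk [x])⁻¹
      rw [mul_inv_cancel_right, norm_inv_eq] at h1
      have h2 : (FreeGroup.mk [x]).norm ≤ 1 := norm_mk_le
      omega
    rw [e, ih _ _ (by omega), take_letter _ _ _ (by omega)]

lemma take_mul [DecidableEq α] (g h : FreeGroup α) (k : ℕ) (hk : k + h.norm ≤ g.norm) :
    (g * h).toWord.take k = g.toWord.take k := by
  have := take_mul_mk h.toWord g k hk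
  rwa [mk_toWord] at this

lemma mk_letter (x : α) (e : Bool) :
    FreeGroup.mk [(x, e)] = if e then FreeGroup.of x else (FreeGroup.of x)⁻¹ := by
  cases e
  · simp [FreeGroup.of, inv_mk, invRev]
  · simp [FreeGroup.of]

lemma norm_map_le [DecidableEq α] (f : FreeGroup α ≃* FreeGroup α)
    (hf : ∀ x, (f (FreeGroup.of x)).norm ≤ 2) (g : FreeGroup α) : (f g).norm ≤ 2 * g.norm := by
  have key : ∀ L : List (α × Bool), (f (FreeGroup.mk L)).norm ≤ 2 * L.length := by
    intro L
    induction L with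
    | nil => rw [← one_eq_mk, _root_.map_one]; simp
    | cons x L ih =>
      have e : FreeGroup.mk (x :: L) = FreeGroup.mk [x] * FreeGroup.mk L := by
        rw [mul_mk]; rfl
      have h1 : (f (FreeGroup.mk [x])).norm ≤ 2 := by
        rcases x with ⟨x, d⟩
        rw [mk_letter]
        cases d
        · simpa using hf x
        · simpa using hf x
      have := norm_mul_le (f (FreeGroup.mk [x])) (f (FreeGroup.mk L))
      rw [e, _root_.map_mul, List.length_cons]
      omega
  have := key g.toWord
  rwa [mk_toWord] at this

lemma mk_cons (x : α × Bool) (L : List (α × Bool)) :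
    FreeGroup.mk (x :: L) = FreeGroup.mk [x] * FreeGroup.mk L := by
  rw [mul_mk]; rfl

lemma table [DecidableEq α] (a b : α) (hab : a ≠ b)
    (φ : FreeGroup α ≃* FreeGroup α)
    (hφa : φ (FreeGroup.of a) = FreeGroup.of a * FreeGroup.of b)
    (hφ : ∀ x : α, x ≠ a → φ (FreeGroup.of x) = FreeGroup.of x)
    (L : List (α × Bool)) : IsReduced L → ∀ R, R = (φ (FreeGroup.mk L)).toWord →
      (L = [] ∧ R = []) ∨
      (L.head? = some (a, true) ∧ R.head? = some (a, true)) ∨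
      (L.head? = some (a, false) ∧ R.head? = some (b, false) ∧ R.tail.head? = some (a, false)) ∨
      (L.head? = some (b, true) ∧ (R.head? = some (b, true) ∨ R.head? = some (a, false))) ∨
      (L.head? = some (b, false) ∧ R.head? = some (b, false) ∧ R.tail.head? ≠ some (a, false)) ∨
      (∃ x e, x ≠ a ∧ x ≠ b ∧ L.head? = some (x, e) ∧ R.head? = some (x, e)) := by
  induction L with
  | nil => intro _ R hR; left; rw [← one_eq_mk, _root_.map_one] at hR; simp [hR]
  | cons x L ih =>
    intro hL R hR
    rw [isReduced_cons_iff] at hL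
    obtain ⟨hh, hL⟩ := hL
    have ih := ih hL _ rfl
    rw [mk_cons, _root_.map_mul] at hR
    set S := (φ (FreeGroup.mk L)).toWord with hS
    have hSr : IsReduced S := isReduced_toWord
    rcases x with ⟨x, e⟩
    by_cases hxa : x = a
    · subst hxa
      cases e
      · have : R = rc (b, false) (rc (x, false) S) := by
          rw [hR, hS, ← toWord_letter_mul, ← toWord_letter_mul, ← mul_assoc]
          simp [mk_letter, hφa]
        have h2 : S.head? ≠ some (x, true) := by
          simp only [linv] at hh
          grind
        have h3 : rc (x, false) S = (x, false) :: S := by simp [rc, linv, h2]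
        rw [h3] at this
        have h4 : R = (b, false) :: (x, false) :: S := by
          rw [this]; simp [rc, linv, hab]
        simp [h4]
      · have : R = rc (x, true) (rc (b, true) S) := by
          rw [hR, hS, ← toWord_letter_mul, ← toWord_letter_mul, ← mul_assoc]
          simp [mk_letter, hφa]
        have h2 : (rc (b, true) S).head? ≠ some (x, false) := by
          simp only [linv] at hh
          unfold rc linv
          grind
        have h4 : R = (x, true) :: rc (b, true) S := by
          rw [this]
          exact if_neg h2
        simp [h4]
    · have hR' : R = rc (x, e) S := by
        rw [hR, hS, ← toWord_letter_mul]
        cases e <;> simp [mk_letter, hφ x hxa]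
      by_cases hxb : x = b
      · subst hxb
        unfold rc at hR'
        simp only [linv] at hh hR'
        cases e <;> grind
      · simp only [linv] at hh
        have h2 : S.head? ≠ some (x, !e) := by grind
        have h3 : rc (x, e) S = (x, e) :: S := if_neg h2
        rw [h3] at hR'
        right; right; right; right; right
        exact ⟨x, e, hxa, hxb, by simp, by simp [hR']⟩

lemma head_iff [DecidableEq α] (a b : α) (hab : a ≠ b)
    (φ : FreeGroup α ≃* FreeGroup α)
    (hφa : φ (FreeGroup.of a) = FreeGroup.of a * FreeGroup.of b)
    (hφ : ∀ x : α, x ≠ a → φ (FreeGroup.of x) = FreeGroup.of x) (g : FreeGroup α) :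
    g.toWord.head? = some (b, true) ↔
      ((φ g).toWord.head? = some (b, true) ∨ (φ g).toWord.head? = some (a, false)) := by
  have := table a b hab φ hφa hφ g.toWord isReduced_toWord _ rfl
  rw [mk_toWord] at this
  grind

/-- prefix by `w x` versus head of `w⁻¹ g`. -/
lemma prefix_iff [DecidableEq α] (w g : FreeGroup α) (x : α × Bool)
    (hw : w.toWord.getLast? ≠ some (linv x)) :
    (w.toWord ++ [x]) <+: g.toWord ↔ (w⁻¹ * g).toWord.head? = some x := by
  constructor
  · rintro ⟨t, ht⟩
    have hr : IsReduced (x :: t) :=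
      (isReduced_toWord (x := g)).infix ⟨w.toWord, [], by simp [← ht]⟩
    have : w⁻¹ * g = FreeGroup.mk (x :: t) := by
      rw [inv_mul_eq_iff_eq_mul, ← mk_toWord (x := g), ← ht]
      conv_rhs => rw [← mk_toWord (x := w)]
      rw [mul_mk]; simp
    rw [this, toWord_mk_red hr]; rfl
  · intro h
    have hr : IsReduced (w.toWord ++ (w⁻¹ * g).toWord) := by
      rw [isReduced_append_iff isReduced_toWord isReduced_toWord]
      intro y hy z hz hzy
      rw [h] at hz
      simp at hz
      subst hz
      apply hw
      rw [hzy, linv_linv]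
      exact hy
    have e : g.toWord = w.toWord ++ (w⁻¹ * g).toWord := by
      conv_lhs => rw [← mul_inv_cancel_left w g, toWord_mul, hr.reduce_eq]
    obtain ⟨t, ht⟩ := List.head?_eq_some_iff.1 h
    rw [e, ht]
    exact ⟨t, by simp⟩

lemma getLast_inv [DecidableEq α] (g : FreeGroup α) (x : α × Bool) :
    g.toWord.getLast? = some (linv x) ↔ g⁻¹.toWord.head? = some x := by
  rw [toWord_inv, invRev, List.head?_reverse, List.getLast?_map]
  rcases x with ⟨x, e⟩
  cases h : g.toWord.getLast? with
  | none => simp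
  | some y =>
    rcases y with ⟨y, d⟩
    cases d <;> cases e <;> simp [linv]

lemma toWord_mul_letter [DecidableEq α] (w : FreeGroup α) (x : α × Bool)
    (hw : w.toWord.getLast? ≠ some (linv x)) :
    (w * FreeGroup.mk [x]).toWord = w.toWord ++ [x] := by
  have hr : IsReduced (w.toWord ++ [x]) := by
    rw [isReduced_append_iff isReduced_toWord IsReduced.singleton]
    intro y hy z hz hzy
    simp at hz
    subst hz
    apply hw
    rw [hzy, linv_linv]
    exact hy
  rw [toWord_mul, toWord_mk, reduce_singleton, hr.reduce_eq]

lemma pre_length (ξ : Bd α) (m : ℕ) : (pre ξ m).length = m := by simp [pre]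

lemma pre_red (ξ : Bd α) (m : ℕ) : IsReduced (pre ξ m) := by
  unfold FreeGroup.IsReduced pre
  rw [List.isChain_iff_getElem]
  intro i hi
  rw [rel_iff]
  simpa using ξ.2 i

lemma pre_take (ξ : Bd α) (m k : ℕ) (h : k ≤ m) : (pre ξ m).take k = pre ξ k := by
  apply List.ext_getElem
  · simp [pre, h]
  · intro i h1 h2
    simp [pre]

lemma mem_cyl (ξ : Bd α) (L : List (α × Bool)) : ξ ∈ Cyl L ↔ pre ξ L.length = L := by
  constructor
  · intro h
    apply List.ext_getElem
    · simp [pre]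
    · intro i h1 h2
      have := h i h2
      simpa [pre] using this
  · intro h i hi
    have : (pre ξ L.length)[i]'(by simpa [pre] using hi) = L[i] := by simp only [h]
    simpa [pre] using this

lemma mem_cyl_prefix (ξ : Bd α) (L : List (α × Bool)) (m : ℕ) (hm : L.length ≤ m) :
    ξ ∈ Cyl L ↔ L <+: pre ξ m := by
  rw [mem_cyl, List.prefix_iff_eq_take, pre_take _ _ _ hm, eq_comm]

lemma pre_succ (ξ : Bd α) (m : ℕ) :
    FreeGroup.mk (pre ξ (m + 1)) = FreeGroup.mk (pre ξ m) * FreeGroup.mk [ξ.1 m] := by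
  rw [mul_mk]
  congr 1
  unfold pre
  rw [List.ofFn_succ_last]
  simp

lemma norm_pre [DecidableEq α] (ξ : Bd α) (m : ℕ) : (FreeGroup.mk (pre ξ m)).norm = m := by
  rw [FreeGroup.norm, toWord_mk_red (pre_red ξ m), pre_length]

/-- Surjectivity of the boundary extension, with control on the preimage. -/
lemma exists_limit [DecidableEq α] (φ : FreeGroup α ≃* FreeGroup α)
    (hφ : ∀ g, (φ g).norm ≤ 2 * g.norm) (hψ : ∀ g, (φ.symm g).norm ≤ 2 * g.norm)
    (η : Bd α) : ∃ ξ : Bd α, ∀ k m, 2 * k + 4 ≤ m →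
      (φ.symm (FreeGroup.mk (pre η m))).toWord.take k = pre ξ k := by
  set g : ℕ → FreeGroup α := fun m => φ.symm (FreeGroup.mk (pre η m)) with hg
  have hnorm : ∀ m, m ≤ 2 * (g m).norm := by
    intro m
    have := hφ (g m)
    simpa [hg, norm_pre] using this
  have hlet : ∀ x : α × Bool, (φ.symm (FreeGroup.mk [x])).norm ≤ 2 := by
    intro x
    have h1 := hψ (FreeGroup.mk [x])
    have h2 : (FreeGroup.mk [x]).norm ≤ 1 := norm_mk_le
    omega
  have hstep : ∀ k m, 2 * k + 4 ≤ m → (g (m + 1)).toWord.take k = (g m).toWord.take k := by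
    intro k m hm
    have e : g (m + 1) = g m * φ.symm (FreeGroup.mk [η.1 m]) := by
      simp only [hg, pre_succ, _root_.map_mul]
    rw [e]
    apply take_mul
    have := hnorm m
    have := hlet (η.1 m)
    omega
  have hst : ∀ k m, 2 * k + 4 ≤ m →
      (g m).toWord.take k = (g (2 * k + 4)).toWord.take k := by
    intro k m hm
    induction m, hm using Nat.le_induction with
    | base => rfl
    | succ m hm ih => rw [hstep k m hm, ih]
  have hlen : ∀ n m, 2 * n + 4 ≤ m → n < (g m).toWord.length := by
    intro n m hm
    have := hnorm m
    unfold FreeGroup.norm at this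
    omega
  let f : ℕ → α × Bool := fun n => (g (2 * (n + 1) + 4)).toWord[n]'(hlen _ _ (by omega))
  have hf : ∀ n m, (hm : 2 * (n + 1) + 4 ≤ m) →
      (g m).toWord[n]'(hlen _ _ (by omega)) = f n := by
    intro n m hm
    have h := hst (n + 1) m hm
    have h' := congrArg (fun L => L[n]?) h
    have l1 := hlen n m (by omega)
    have l2 := hlen n (2 * (n + 1) + 4) (by omega)
    simp only [List.getElem?_take, Nat.lt_succ_self, if_true, List.getElem?_eq_getElem l1,
      List.getElem?_eq_getElem l2, Option.some.injEq] at h'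
    exact h'
  refine ⟨⟨f, ?_⟩, ?_⟩
  · intro n
    have hr : FreeGroup.IsReduced (g (2 * (n + 2) + 4)).toWord := isReduced_toWord
    unfold FreeGroup.IsReduced at hr
    rw [List.isChain_iff_getElem] at hr
    have := hr n (hlen (n + 1) _ (by omega))
    rw [rel_iff, hf n _ (by omega), hf (n + 1) _ (by omega)] at this
    exact this
  · intro k m hm
    apply List.ext_getElem
    · have := hlen k m hm
      simp [pre]
      change k ≤ (g m).toWord.length
      omega
    · intro i h1 h2
      have hi : i < k := by simpa [pre] using h2
      rw [List.getElem_take]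
      simp only [pre, List.getElem_ofFn]
      exact hf i m (by omega)

lemma image_limit [DecidableEq α] (φ : FreeGroup α ≃* FreeGroup α)
    (hφ : ∀ g, (φ g).norm ≤ 2 * g.norm) (hψ : ∀ g, (φ.symm g).norm ≤ 2 * g.norm)
    (Φ : Bd α → Bd α) (hΦ : ExtendsBd φ Φ) (η ξ : Bd α)
    (h : ∀ k m, 2 * k + 4 ≤ m →
      (φ.symm (FreeGroup.mk (pre η m))).toWord.take k = pre ξ k) : Φ ξ = η := by
  have key : ∀ k, pre (Φ ξ) k = pre η k := by
    intro k
    obtain ⟨n, hn⟩ := hΦ ξ k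
    set j := n + 2 * k + 5 with hj
    have h1 := hn j (by omega)
    change _ = pre (Φ ξ) k at h1
    rw [← h1]
    let P : ℕ → Prop := fun m => (φ.symm (FreeGroup.mk (pre η m))).toWord.take j = pre ξ j
    have hP : ∃ m, P m := ⟨2 * j + 4, h j _ le_rfl⟩
    classical
    have hm := Nat.find_spec hP
    have hmin := fun m' => Nat.find_min (m := m') hP
    set m := Nat.find hP with hmdef
    have hm' : (φ.symm (FreeGroup.mk (pre η m))).toWord.take j = pre ξ j := hm
    have hjm : j ≤ (φ.symm (FreeGroup.mk (pre η m))).norm := by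
      have := congrArg List.length hm'
      rw [pre_length, List.length_take] at this
      unfold FreeGroup.norm
      omega
    have hm2 : j ≤ 2 * m := by
      have := hψ (FreeGroup.mk (pre η m))
      rw [norm_pre] at this
      omega
    have hup : (φ.symm (FreeGroup.mk (pre η m))).norm ≤ j + 1 := by
      by_contra hcon
      obtain ⟨p, hp⟩ : ∃ p, m = p + 1 := ⟨m - 1, by omega⟩
      apply hmin p (by omega)
      change _ = _
      rw [← hm']
      have e : φ.symm (FreeGroup.mk (pre η p)) =
          φ.symm (FreeGroup.mk (pre η m)) * (φ.symm (FreeGroup.mk [η.1 p]))⁻¹ := by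
        rw [hp, pre_succ, _root_.map_mul, mul_inv_cancel_right]
      rw [e]
      apply take_mul
      have h2 := hψ (FreeGroup.mk [η.1 p])
      have h3 : (FreeGroup.mk [η.1 p]).norm ≤ 1 := norm_mk_le
      rw [norm_inv_eq]
      omega
    set G := φ.symm (FreeGroup.mk (pre η m)) with hG
    have hdec : G = FreeGroup.mk (pre ξ j) * FreeGroup.mk (G.toWord.drop j) := by
      rw [mul_mk, ← hm', List.take_append_drop, mk_toWord]
    have hr : (FreeGroup.mk (G.toWord.drop j)).norm ≤ 1 := by
      refine norm_mk_le.trans ?_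
      unfold FreeGroup.norm at hup
      simp
      omega
    have e2 : φ (FreeGroup.mk (pre ξ j)) =
        FreeGroup.mk (pre η m) * (φ (FreeGroup.mk (G.toWord.drop j)))⁻¹ := by
      rw [eq_mul_inv_iff_mul_eq, ← _root_.map_mul, ← hdec, hG]
      simp
    rw [e2, take_mul, toWord_mk_red (pre_red η m), pre_take _ _ _ (by omega)]
    have := hφ (FreeGroup.mk (G.toWord.drop j))
    rw [norm_inv_eq, norm_pre]
    omega
  apply Subtype.ext
  funext n
  have := congrArg (fun L => L[n]?) (key (n + 1))
  simpa [pre, -List.ofFn_succ] using this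

end NielsenAux

open NielsenAux

/-- Nielsen automorphism `a ↦ ab`: `φ(C¹_{w·b}) = C¹_{φ(w)·b} ∪ C¹_{φ(w)·a⁻¹}`. -/
theorem stmt1 [DecidableEq α] [Nontrivial α] (a b : α) (hab : a ≠ b)
    (φ : FreeGroup α ≃* FreeGroup α)
    (hφa : φ (FreeGroup.of a) = FreeGroup.of a * FreeGroup.of b)
    (hφ : ∀ x : α, x ≠ a → φ (FreeGroup.of x) = FreeGroup.of x)
    (Φ : Bd α → Bd α) (hΦ : ExtendsBd φ Φ)
    (w : FreeGroup α)
    (hred : (w * FreeGroup.of b).toWord = w.toWord ++ [(b, true)])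
    (hlast : w.toWord.getLast? ≠ some (a, false)) :
    Φ '' Cyl ((w * FreeGroup.of b).toWord) =
      Cyl ((φ w * FreeGroup.of b).toWord) ∪ Cyl ((φ w * (FreeGroup.of a)⁻¹).toWord) := by
  have hφ2 : ∀ g, (φ g).norm ≤ 2 * g.norm := by
    apply norm_map_le
    intro x
    by_cases hx : x = a
    · rw [hx, hφa]
      have := norm_mul_le (FreeGroup.of a) (FreeGroup.of b)
      simpa using this
    · rw [hφ x hx]; simp
  have hψ2 : ∀ g, (φ.symm g).norm ≤ 2 * g.norm := by
    apply norm_map_le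
    intro x
    by_cases hx : x = a
    · have e : φ.symm (FreeGroup.of a) = FreeGroup.of a * (FreeGroup.of b)⁻¹ := by
        rw [MulEquiv.symm_apply_eq, _root_.map_mul, _root_.map_inv, hφa, hφ b hab.symm,
          mul_inv_cancel_right]
      have := norm_mul_le (FreeGroup.of a) (FreeGroup.of b)⁻¹
      rw [hx, e]
      simpa using this
    · have e : φ.symm (FreeGroup.of x) = FreeGroup.of x := by
        rw [MulEquiv.symm_apply_eq, hφ x hx]
      rw [e]; simp
  have hwb : w.toWord.getLast? ≠ some (linv (b, true)) := by
    intro h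
    have hr : FreeGroup.IsReduced (w.toWord ++ [(b, true)]) := by
      rw [← hred]; exact isReduced_toWord
    rw [isReduced_append_iff isReduced_toWord IsReduced.singleton] at hr
    exact hr _ h (b, true) (by simp) (by simp [linv])
  have hH := head_iff a b hab φ hφa hφ
  -- `φ w` does not end in `b⁻¹` or `a`
  have hT : (w⁻¹).toWord.head? ≠ some (b, true) := fun h => hwb ((getLast_inv w _).2 h)
  rw [Ne, hH w⁻¹, _root_.map_inv] at hT
  push Not at hT
  have h1 : (φ w).toWord.getLast? ≠ some (linv (b, true)) :=
    fun h => hT.1 ((getLast_inv _ _).1 h)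
  have h2 : (φ w).toWord.getLast? ≠ some (linv (a, false)) :=
    fun h => hT.2 ((getLast_inv _ _).1 h)
  have e1 : (φ w * FreeGroup.of b).toWord = (φ w).toWord ++ [(b, true)] :=
    toWord_mul_letter (φ w) (b, true) h1
  have e2 : (φ w * (FreeGroup.of a)⁻¹).toWord = (φ w).toWord ++ [(a, false)] := by
    have := toWord_mul_letter (φ w) (a, false) h2
    simpa [mk_letter] using this
  have main : ∀ g : FreeGroup α, (w.toWord ++ [(b, true)]) <+: g.toWord ↔
      ((φ w).toWord ++ [(b, true)]) <+: (φ g).toWord ∨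
      ((φ w).toWord ++ [(a, false)]) <+: (φ g).toWord := by
    intro g
    rw [prefix_iff w g _ hwb, prefix_iff _ _ _ h1, prefix_iff _ _ _ h2, hH, _root_.map_mul,
      _root_.map_inv]
  rw [hred, e1, e2]
  ext η
  constructor
  · rintro ⟨ξ, hξ, rfl⟩
    set K := (φ w).toWord.length + 1 with hK
    obtain ⟨n, hn⟩ := hΦ ξ K
    set m := n + (w.toWord.length + 1) with hm
    have hmn := hn m (by omega)
    change _ = pre (Φ ξ) K at hmn
    rw [mem_cyl_prefix _ _ m (by simp; omega)] at hξ
    have hp := (main (FreeGroup.mk (pre ξ m))).1 (by rwa [toWord_mk_red (pre_red ξ m)])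
    rcases hp with hp | hp
    · left
      rw [mem_cyl_prefix _ _ K (by simp [hK]), ← hmn, List.prefix_take_iff]
      exact ⟨hp, by simp [hK]⟩
    · right
      rw [mem_cyl_prefix _ _ K (by simp [hK]), ← hmn, List.prefix_take_iff]
      exact ⟨hp, by simp [hK]⟩
  · intro hη
    obtain ⟨ξ, hξ⟩ := exists_limit φ hφ2 hψ2 η
    refine ⟨ξ, ?_, image_limit φ hφ2 hψ2 Φ hΦ η ξ hξ⟩
    set k := w.toWord.length + 1 with hk
    set m := (φ w).toWord.length + 1 + (2 * k + 4) with hm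
    have hp : (w.toWord ++ [(b, true)]) <+: (φ.symm (FreeGroup.mk (pre η m))).toWord := by
      rw [main, MulEquiv.apply_symm_apply, toWord_mk_red (pre_red η m)]
      rcases hη with hη | hη
      · left
        rwa [mem_cyl_prefix _ _ m (by simp; omega)] at hη
      · right
        rwa [mem_cyl_prefix _ _ m (by simp; omega)] at hη
    rw [mem_cyl_prefix _ _ k (by simp [hk]), ← hξ k m (by omega), List.prefix_take_iff]
    exact ⟨hp, by simp [hk]⟩
end

section
/- For the elementary Nielsen automorphism φ (a ↦ ab, fixing b and each c_j) and any reduced word w such that w·c_j is reduced, the image of the cylinder C¹_{w·c_j} under the boundary extension of φ equals C¹_{φ(w)·c_j}, and analogously φ(C¹_{w·c_j⁻¹}) = C¹_{φ(w)·c_j⁻¹} when w·c_j⁻¹ is reduced. -/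
open FreeGroup

variable {α : Type*}

/-- Left multiplication of a reduced word by a letter. -/
def cns [DecidableEq α] (x : α × Bool) (n : List (α × Bool)) : List (α × Bool) :=
  match n with
  | [] => [x]
  | y :: t => if x.1 = y.1 ∧ x.2 = !y.2 then t else x :: y :: t

theorem toWord_cns [DecidableEq α] (x : α × Bool) (g : FreeGroup α) :
    (FreeGroup.mk [x] * g).toWord = cns x g.toWord := by
  conv_lhs => rw [← FreeGroup.mk_toWord (x := g), FreeGroup.mul_mk]
  rw [FreeGroup.toWord_mk, List.singleton_append, FreeGroup.reduce.cons, FreeGroup.reduce_toWord]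
  cases g.toWord <;> rfl

/-- Decoding of the first letter from the first two letters of the image. -/
def dec [DecidableEq α] (a b : α) (d : Bool) (m : List (α × Bool)) : Option (α × Bool) :=
  match m with
  | [] => none
  | x :: t => if x = (a, false) then some (b, d) else
      if x = (b, !d) then (if t.head? = some (a, false) then some (a, false) else some (b, !d))
      else some x

/-- generalized Nielsen map. -/
structure Niel (a b : α) (d : Bool) (φ : FreeGroup α →* FreeGroup α) : Prop where
  ne : a ≠ b
  ha : φ (FreeGroup.mk [(a, true)]) = FreeGroup.mk [(a, true)] * FreeGroup.mk [(b, d)]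
  hx : ∀ x : α × Bool, x.1 ≠ a → φ (FreeGroup.mk [x]) = FreeGroup.mk [x]

theorem Niel.ha' {a b : α} {d : Bool} {φ : FreeGroup α →* FreeGroup α} (H : Niel a b d φ) :
    φ (FreeGroup.mk [(a, false)]) = FreeGroup.mk [(b, !d)] * FreeGroup.mk [(a, false)] := by
  have h1 : (FreeGroup.mk [(a, false)]) = (FreeGroup.mk [(a, true)])⁻¹ := by
    simp [FreeGroup.inv_mk, FreeGroup.invRev]
  have h2 : (FreeGroup.mk [(b, !d)]) = (FreeGroup.mk [(b, d)])⁻¹ := by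
    simp [FreeGroup.inv_mk, FreeGroup.invRev]
  rw [h1, h2, _root_.map_inv, H.ha, mul_inv_rev]

theorem Niel.dec_eq [DecidableEq α] {a b : α} {d : Bool} {φ : FreeGroup α →* FreeGroup α}
    (H : Niel a b d φ) (l : List (α × Bool)) (hl : FreeGroup.IsReduced l) :
    dec a b d (φ (FreeGroup.mk l)).toWord = l.head? := by
  induction l with
  | nil => 
    have : FreeGroup.mk ([] : List (α × Bool)) = 1 := rfl
    rw [this, _root_.map_one]; simp [dec]
  | cons y t ih =>
    have ht : FreeGroup.IsReduced t := hl.tail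
    have hh : t.head? ≠ some (y.1, !y.2) := by
      intro h
      cases t with
      | nil => simp at h
      | cons z t => 
        simp at h; subst h
        have := (List.isChain_cons_cons.1 hl).1 
        simp at this
    have ih := ih ht
    rw [← ih] at hh
    have hm : FreeGroup.mk (y :: t) = FreeGroup.mk [y] * FreeGroup.mk t := by
      rw [FreeGroup.mul_mk]; rfl
    rw [hm, _root_.map_mul]
    generalize (φ (FreeGroup.mk t)) = G at *
    have hne := H.ne
    clear ih hm hl ht
    obtain ⟨y, e⟩ := y
    by_cases hy : y = a
    · subst hy
      cases e
      · rw [H.ha', mul_assoc, toWord_cns, toWord_cns]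
        generalize G.toWord = n at *
        rcases n with _ | ⟨⟨x, f⟩, _ | ⟨⟨x', f'⟩, n⟩⟩ <;> cases d <;> simp [cns, dec] at * <;> grind [cns, dec]
      · rw [H.ha, mul_assoc, toWord_cns, toWord_cns]
        generalize G.toWord = n at *
        rcases n with _ | ⟨⟨x, f⟩, _ | ⟨⟨x', f'⟩, n⟩⟩ <;> cases d <;> simp [cns, dec] at * <;> grind [cns, dec]
    · rw [H.hx _ hy, toWord_cns]
      generalize G.toWord = n at *
      cases e <;> cases d <;> rcases n with _ | ⟨⟨x, _ | _⟩, _ | ⟨⟨x', f'⟩, n⟩⟩ <;>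
        simp [cns, dec] at * <;> grind [cns, dec]

theorem not_rel {x y : α × Bool} (h : ¬ (x.1 = y.1 → x.2 = y.2)) : y = (x.1, !x.2) := by
  obtain ⟨x, e⟩ := x
  obtain ⟨y, f⟩ := y
  cases e <;> cases f <;> simp_all

theorem not_rel' {x y : α × Bool} (h : ¬ (x.1 = y.1 → x.2 = y.2)) : x = (y.1, !y.2) := by
  obtain ⟨x, e⟩ := x
  obtain ⟨y, f⟩ := y
  cases e <;> cases f <;> simp_all

theorem toWord_mk_red [DecidableEq α] {l : List (α × Bool)} (h : FreeGroup.IsReduced l) :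
    (FreeGroup.mk l).toWord = l := by
  rw [FreeGroup.toWord_mk, h.reduce_eq]

theorem bc_word [DecidableEq α] (G H : FreeGroup α) :
    G.toWord.dropLast <+: (G * H).toWord ∨
      ∃ y z s q, G⁻¹.toWord = z :: y :: s ∧ H.toWord = z :: y :: q := by
  have hG : FreeGroup.IsReduced G.toWord := FreeGroup.isReduced_toWord
  have hH : FreeGroup.IsReduced H.toWord := FreeGroup.isReduced_toWord
  rw [FreeGroup.toWord_inv, FreeGroup.toWord_mul]
  generalize G.toWord = P at *
  generalize H.toWord = Q at *
  rcases List.eq_nil_or_concat' P with rfl | ⟨P, z, rfl⟩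
  · simp
  rcases List.eq_nil_or_concat' P with rfl | ⟨P, y, rfl⟩
  · simp
  rcases Q with _ | ⟨x, Q⟩
  · left
    rw [List.append_nil, hG.reduce_eq]
    simp
  by_cases hx : z.1 = x.1 → z.2 = x.2
  · left
    have : FreeGroup.IsReduced ((P ++ [y] ++ [z]) ++ (x :: Q)) := by
      unfold FreeGroup.IsReduced at *
      rw [List.isChain_append]
      refine ⟨hG, hH, ?_⟩
      simpa using hx
    rw [this.reduce_eq]
    simp
  have hx' : x = (z.1, !z.2) := not_rel hx
  subst hx'
  have e1 : FreeGroup.reduce (P ++ [y] ++ [z] ++ (z.1, !z.2) :: Q) =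
      FreeGroup.reduce (P ++ [y] ++ Q) := by
    apply FreeGroup.reduce.eq_of_red
    apply FreeGroup.Red.Step.to_red
    have := @FreeGroup.Red.Step.not α (P ++ [y]) Q z.1 z.2
    simpa using this
  rw [e1]
  have hG' : FreeGroup.IsReduced (P ++ [y]) := hG.infix ⟨[], [z], by simp⟩
  rcases Q with _ | ⟨x, Q⟩
  · left
    rw [List.append_nil, hG'.reduce_eq]
    simp
  by_cases hx : y.1 = x.1 → y.2 = x.2
  · left
    have : FreeGroup.IsReduced ((P ++ [y]) ++ (x :: Q)) := by
      have hH' : FreeGroup.IsReduced (x :: Q) := hH.tail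
      unfold FreeGroup.IsReduced at *
      rw [List.isChain_append]
      refine ⟨hG', hH', ?_⟩
      simpa using hx
    rw [this.reduce_eq]
    simp
  right
  have hx' : x = (y.1, !y.2) := not_rel hx
  subst hx'
  exact ⟨(y.1, !y.2), (z.1, !z.2), FreeGroup.invRev P, Q, by simp [FreeGroup.invRev], rfl⟩

theorem Niel.prefix [DecidableEq α] {a b : α} {d : Bool} {φ : FreeGroup α →* FreeGroup α}
    (H : Niel a b d φ) (u v : List (α × Bool)) (hl : FreeGroup.IsReduced (u ++ v)) :
    (φ (FreeGroup.mk u)).toWord.dropLast <+: (φ (FreeGroup.mk (u ++ v))).toWord := by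
  have hu : FreeGroup.IsReduced u := hl.infix ⟨[], v, by simp⟩
  have hv : FreeGroup.IsReduced v := hl.infix ⟨u, [], by simp⟩
  rw [← FreeGroup.mul_mk, _root_.map_mul]
  rcases bc_word (φ (FreeGroup.mk u)) (φ (FreeGroup.mk v)) with h | ⟨y, z, s, q, h1, h2⟩
  · exact h
  exfalso
  rw [← _root_.map_inv, FreeGroup.inv_mk] at h1
  have hi : FreeGroup.IsReduced (FreeGroup.invRev u) := by
    have := FreeGroup.isReduced_toWord (x := (FreeGroup.mk u)⁻¹)
    rwa [FreeGroup.toWord_inv, toWord_mk_red hu] at this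
  have k1 := H.dec_eq _ hi
  have k2 := H.dec_eq _ hv
  rw [h1] at k1
  rw [h2] at k2
  have k3 : dec a b d (z :: y :: s) = dec a b d (z :: y :: q) := by simp [dec]
  have k4 : dec a b d (z :: y :: q) ≠ none := by
    simp only [dec]; split_ifs <;> simp
  rw [k1, k2] at k3
  rw [k2] at k4
  rcases v with _ | ⟨x, v⟩
  · simp at k4
  rcases List.eq_nil_or_concat' u with rfl | ⟨u, t, rfl⟩
  · simp at k3
  simp [FreeGroup.invRev] at k3
  subst k3
  unfold FreeGroup.IsReduced at hl
  rw [List.isChain_append] at hl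
  have := hl.2.2
  simp at this

theorem Niel.split [DecidableEq α] {a b : α} {d : Bool} {φ : FreeGroup α →* FreeGroup α}
    (H : Niel a b d φ) (L : α × Bool) (hLa : L.1 ≠ a) (hLb : L.1 ≠ b)
    (u v : List (α × Bool)) (hl : FreeGroup.IsReduced (u ++ L :: v)) :
    (φ (FreeGroup.mk (u ++ L :: v))).toWord =
      (φ (FreeGroup.mk u)).toWord ++ L :: (φ (FreeGroup.mk v)).toWord := by
  have hu : FreeGroup.IsReduced u := hl.infix ⟨[], L :: v, by simp⟩
  have hv : FreeGroup.IsReduced v := hl.infix ⟨u ++ [L], [], by simp⟩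
  have hi : FreeGroup.IsReduced (FreeGroup.invRev u) := by
    have := FreeGroup.isReduced_toWord (x := (FreeGroup.mk u)⁻¹)
    rwa [FreeGroup.toWord_inv, toWord_mk_red hu] at this
  have k1 := H.dec_eq _ hi
  have k2 := H.dec_eq _ hv
  rw [← FreeGroup.inv_mk, _root_.map_inv, FreeGroup.toWord_inv] at k1
  have e : FreeGroup.mk (u ++ L :: v) =
      FreeGroup.mk u * (FreeGroup.mk [L] * FreeGroup.mk v) := by
    simp [FreeGroup.mul_mk]
  rw [e, _root_.map_mul, _root_.map_mul, H.hx L hLa]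
  have hP : FreeGroup.IsReduced (φ (FreeGroup.mk u)).toWord := FreeGroup.isReduced_toWord
  have hQ : FreeGroup.IsReduced (φ (FreeGroup.mk v)).toWord := FreeGroup.isReduced_toWord
  have hR : FreeGroup.IsReduced
      ((φ (FreeGroup.mk u)).toWord ++ L :: (φ (FreeGroup.mk v)).toWord) := by
    generalize (φ (FreeGroup.mk u)).toWord = P at *
    generalize (φ (FreeGroup.mk v)).toWord = Q at *
    unfold FreeGroup.IsReduced at *
    rw [List.isChain_append] at hl ⊢
    obtain ⟨-, hl1, hl2⟩ := hl
    refine ⟨hP, ?_, ?_⟩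
    · rcases Q with _ | ⟨x, Q⟩
      · simp
      rw [List.isChain_cons_cons]
      refine ⟨?_, hQ⟩
      by_contra hx
      have hx' : x = (L.1, !L.2) := not_rel hx
      subst hx'
      have : dec a b d ((L.1, !L.2) :: Q) = some (L.1, !L.2) := by
        simp [dec, hLa, hLb]
      rw [k2] at this
      rcases v with _ | ⟨x, v⟩
      · simp at this
      simp at this
      subst this
      simp at hl1
    · rcases List.eq_nil_or_concat' P with rfl | ⟨P, t, rfl⟩
      · simp
      simp only [List.getLast?_concat, List.head?_cons, Option.mem_def, Option.some.injEq]
      rintro _ rfl _ rfl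
      by_contra hx
      have hx' : t = (L.1, !L.2) := not_rel' hx
      subst hx'
      have : dec a b d (FreeGroup.invRev (P ++ [(L.1, !L.2)])) = some L := by
        simp [FreeGroup.invRev, dec, hLa, hLb, Prod.ext_iff]
      rw [k1] at this
      rcases List.eq_nil_or_concat' u with rfl | ⟨u, s, rfl⟩
      · simp at this
      simp [FreeGroup.invRev] at this
      subst this
      simp at hl2
  have := toWord_mk_red hR
  rw [← this]
  congr 1
  rw [← List.singleton_append (l := (φ (FreeGroup.mk v)).toWord), ← FreeGroup.mul_mk,
    ← FreeGroup.mul_mk, FreeGroup.mk_toWord, FreeGroup.mk_toWord]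

theorem Niel.length_le [DecidableEq α] {a b : α} {d : Bool} {φ : FreeGroup α →* FreeGroup α}
    (H : Niel a b d φ) (l : List (α × Bool)) :
    (φ (FreeGroup.mk l)).toWord.length ≤ 2 * l.length := by
  change (φ (FreeGroup.mk l)).norm ≤ _
  induction l with
  | nil =>
    have : FreeGroup.mk ([] : List (α × Bool)) = 1 := rfl
    rw [this, _root_.map_one]; simp
  | cons y t ih =>
    have hm : FreeGroup.mk (y :: t) = FreeGroup.mk [y] * FreeGroup.mk t := by
      rw [FreeGroup.mul_mk]; rfl
    have h1 : (φ (FreeGroup.mk [y])).norm ≤ 2 := by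
      by_cases hy : y.1 = a
      · obtain ⟨y, e⟩ := y
        simp only at hy
        subst hy
        cases e
        · rw [H.ha', FreeGroup.mul_mk]; exact FreeGroup.norm_mk_le
        · rw [H.ha, FreeGroup.mul_mk]; exact FreeGroup.norm_mk_le
      · rw [H.hx y hy]; exact FreeGroup.norm_mk_le.trans (by simp)
    rw [hm, _root_.map_mul]
    have := FreeGroup.norm_mul_le (φ (FreeGroup.mk [y])) (φ (FreeGroup.mk t))
    simp only [List.length_cons]
    omega

theorem pre_length (ξ : Bd α) (m : ℕ) : (pre ξ m).length = m := by simp [pre]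

theorem pre_red (ξ : Bd α) (m : ℕ) : FreeGroup.IsReduced (pre ξ m) := by
  unfold FreeGroup.IsReduced
  rw [List.isChain_iff_getElem]
  intro i hi h
  simp only [pre, List.getElem_ofFn] at h ⊢
  by_contra h2
  apply ξ.2 i
  have : (ξ.1 i).2 = !(ξ.1 (i+1)).2 := by
    cases h3 : (ξ.1 i).2 <;> cases h4 : (ξ.1 (i+1)).2 <;> simp_all
  simp [linv, h, this]

theorem pre_take (ξ : Bd α) {k m : ℕ} (h : k ≤ m) : (pre ξ m).take k = pre ξ k := by
  apply List.ext_getElem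
  · simp [pre, h]
  · intro i h1 h2
    simp [pre]

theorem mem_Cyl (ξ : Bd α) (w : List (α × Bool)) : ξ ∈ Cyl w ↔ pre ξ w.length = w := by
  constructor
  · intro h
    apply List.ext_getElem
    · simp [pre]
    · intro i h1 h2
      simpa [pre] using h i h2
  · intro h i hi
    have : (pre ξ w.length)[i]? = w[i]? := by rw [h]
    simpa [pre, hi] using this

theorem ext_lim [DecidableEq α] {φ : FreeGroup α ≃* FreeGroup α} {Φ : Bd α → Bd α}
    (hΦ : ExtendsBd φ Φ) (ξ : Bd α) (k N : ℕ) (l : List (α × Bool))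
    (h : ∀ m, N ≤ m → ((φ (FreeGroup.mk (pre ξ m))).toWord).take k = l) :
    pre (Φ ξ) k = l := by
  obtain ⟨n, hn⟩ := hΦ ξ k
  rw [← h (max n N) (le_max_right _ _), hn _ (le_max_left _ _)]
  rfl

theorem main_aux [DecidableEq α] {a b : α} {d : Bool}
    (φ : FreeGroup α ≃* FreeGroup α) (H : Niel a b d φ.toMonoidHom)
    (K : Niel a b (!d) φ.symm.toMonoidHom)
    (Φ : Bd α → Bd α) (hΦ : ExtendsBd φ Φ) (L : α × Bool) (hLa : L.1 ≠ a) (hLb : L.1 ≠ b)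
    (w : FreeGroup α) (hw : FreeGroup.IsReduced (w.toWord ++ [L])) :
    Φ '' Cyl (w.toWord ++ [L]) = Cyl ((φ w * FreeGroup.mk [L]).toWord) := by
  have hwL : (φ w * FreeGroup.mk [L]).toWord = (φ w).toWord ++ [L] := by
    have := H.split L hLa hLb w.toWord [] hw
    rw [← FreeGroup.mul_mk, FreeGroup.mk_toWord, _root_.map_mul, H.hx L hLa] at this
    have e : FreeGroup.mk ([] : List (α × Bool)) = 1 := rfl
    rw [e, _root_.map_one] at this
    simpa using this
  rw [hwL]
  ext η
  constructor
  · rintro ⟨ξ, hξ, rfl⟩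
    rw [mem_Cyl] at hξ ⊢
    apply ext_lim hΦ ξ _ (w.toWord ++ [L]).length
    intro m hm
    have e : pre ξ m = w.toWord ++ L :: (pre ξ m).drop (w.toWord ++ [L]).length := by
      conv_lhs => rw [← List.take_append_drop (w.toWord ++ [L]).length (pre ξ m),
        pre_take ξ hm, hξ]
      simp
    have hr := pre_red ξ m
    rw [e] at hr
    have := H.split L hLa hLb _ _ hr
    rw [← e, FreeGroup.mk_toWord] at this
    change (φ _).toWord = (φ _).toWord ++ L :: (φ _).toWord at this
    rw [this]
    have tk : ∀ P Q : List (α × Bool), (P ++ L :: Q).take (P ++ [L]).length = P ++ [L] := by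
      intro P Q
      rw [List.append_cons P L Q, List.take_left]
    rw [tk]
  · intro hη
    set g : ℕ → List (α × Bool) := fun m => (φ.symm (FreeGroup.mk (pre η m))).toWord with hg
    have gred : ∀ m, FreeGroup.IsReduced (g m) := fun m => FreeGroup.isReduced_toWord
    have hφg : ∀ m, φ (FreeGroup.mk (g m)) = FreeGroup.mk (pre η m) := by
      intro m
      simp [hg, FreeGroup.mk_toWord]
    have glen : ∀ m, m ≤ 2 * (g m).length := by
      intro m
      have := H.length_le (g m)
      change (φ _).toWord.length ≤ _ at this
      rwa [hφg, toWord_mk_red (pre_red η m), pre_length] at this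
    have gpre : ∀ m m', m ≤ m' → (g m).dropLast <+: g m' := by
      intro m m' h
      have e : pre η m' = pre η m ++ (pre η m').drop m := by
        conv_lhs => rw [← List.take_append_drop m (pre η m'), pre_take η h]
      have hr := pre_red η m'
      rw [e] at hr
      have := K.prefix _ _ hr
      rw [← e] at this
      exact this
    let x : ℕ → α × Bool := fun i => (g (2 * i + 4))[i]'(by have := glen (2 * i + 4); omega)
    have hx : ∀ i m, 2 * i + 4 ≤ m → (g m)[i]? = some (x i) := by
      intro i m him
      have h1 := gpre _ _ him
      have h2 := glen (2 * i + 4)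
      have h3 := (List.prefix_iff_getElem?.1 h1) i (by simp; omega)
      rw [h3]
      simp [x]
    have hxr : ∀ n, x (n + 1) ≠ linv (x n) := by
      intro n h
      have h1 := hx n (2 * (n + 1) + 4) (by omega)
      have h2 := hx (n + 1) (2 * (n + 1) + 4) (by omega)
      have h3 := gred (2 * (n + 1) + 4)
      unfold FreeGroup.IsReduced at h3
      rw [List.isChain_iff_getElem] at h3
      obtain ⟨k1, h1⟩ := List.getElem?_eq_some_iff.1 h1
      obtain ⟨k2, h2⟩ := List.getElem?_eq_some_iff.1 h2
      have := h3 n k2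
      rw [h1, h2, h] at this
      simp [linv] at this
    let ξ : Bd α := ⟨x, hxr⟩
    have hξ : ∀ k m, 2 * k + 4 ≤ m → (g m).take k = pre ξ k := by
      intro k m hkm
      have := glen m
      apply List.ext_getElem
      · simp [pre]; omega
      · intro i h1 h2
        rw [pre_length] at h2
        obtain ⟨_, h3⟩ := List.getElem?_eq_some_iff.1 (hx i m (by omega))
        simp [pre, h3, ξ]
    refine ⟨ξ, ?_, ?_⟩
    · rw [mem_Cyl] at hη ⊢
      obtain ⟨M, hM⟩ : ∃ M, M = 2 * (w.toWord ++ [L]).length + 4 + ((φ w).toWord ++ [L]).length :=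
        ⟨_, rfl⟩
      rw [← hξ _ M (by omega)]
      have e : pre η M = (φ w).toWord ++ L :: (pre η M).drop ((φ w).toWord ++ [L]).length := by
        conv_lhs => rw [← List.take_append_drop ((φ w).toWord ++ [L]).length (pre η M),
          pre_take η (by omega), hη]
        simp
      have hr := pre_red η M
      rw [e] at hr
      have := K.split L hLa hLb _ _ hr
      rw [← e, FreeGroup.mk_toWord] at this
      change g M = (φ.symm _).toWord ++ L :: (φ.symm _).toWord at this
      rw [this, φ.symm_apply_apply]
      have tk : ∀ P Q : List (α × Bool), (P ++ L :: Q).take (P ++ [L]).length = P ++ [L] := by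
        intro P Q
        rw [List.append_cons P L Q, List.take_left]
      rw [tk]
    · have : ∀ k, pre (Φ ξ) k = pre η k := by
        intro k
        apply ext_lim hΦ ξ k (2 * k + 2)
        intro m hm
        have e : g (2 * m + 4) = pre ξ m ++ (g (2 * m + 4)).drop m := by
          conv_lhs => rw [← List.take_append_drop m (g (2 * m + 4)), hξ m _ le_rfl]
        have hr := gred (2 * m + 4)
        rw [e] at hr
        have h1 := H.prefix _ _ hr
        rw [← e] at h1
        change (φ _).toWord.dropLast <+: (φ _).toWord at h1
        rw [hφg, toWord_mk_red (pre_red η _)] at h1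
        have h2 := K.length_le (φ (FreeGroup.mk (pre ξ m))).toWord
        rw [FreeGroup.mk_toWord] at h2
        change (φ.symm _).toWord.length ≤ _ at h2
        rw [φ.symm_apply_apply, toWord_mk_red (pre_red ξ m), pre_length] at h2
        rw [← pre_take η (show k ≤ 2 * m + 4 by omega)]
        generalize (φ (FreeGroup.mk (pre ξ m))).toWord = P at *
        obtain ⟨t, ht⟩ := h1
        rw [← ht, List.take_append_of_le_length (by simp; omega), List.dropLast_eq_take,
          List.take_take]
        congr 1
        omega
      apply Subtype.ext
      funext n
      have h := congrArg (fun l => l[n]?) (this (n + 1))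
      simpa [pre, -List.ofFn_succ] using h

/-- Nielsen automorphism `a ↦ ab`: `φ(C¹_{w·c_j}) = C¹_{φ(w)·c_j}` and
`φ(C¹_{w·c_j⁻¹}) = C¹_{φ(w)·c_j⁻¹}`. -/
theorem stmt11 [DecidableEq α] [Nontrivial α] (a b c : α) (hab : a ≠ b)
    (hca : c ≠ a) (hcb : c ≠ b)
    (φ : FreeGroup α ≃* FreeGroup α)
    (hφa : φ (FreeGroup.of a) = FreeGroup.of a * FreeGroup.of b)
    (hφ : ∀ x : α, x ≠ a → φ (FreeGroup.of x) = FreeGroup.of x)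
    (Φ : Bd α → Bd α) (hΦ : ExtendsBd φ Φ)
    (w : FreeGroup α) :
    ((w * FreeGroup.of c).toWord = w.toWord ++ [(c, true)] →
      Φ '' Cyl ((w * FreeGroup.of c).toWord) = Cyl ((φ w * FreeGroup.of c).toWord)) ∧
    ((w * (FreeGroup.of c)⁻¹).toWord = w.toWord ++ [(c, false)] →
      Φ '' Cyl ((w * (FreeGroup.of c)⁻¹).toWord) =
        Cyl ((φ w * (FreeGroup.of c)⁻¹).toWord)) := by
  have e2 : ∀ (x : α), FreeGroup.mk [(x, false)] = (FreeGroup.of x)⁻¹ := by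
    intro x; rfl
  have H : Niel a b true φ.toMonoidHom := by
    refine ⟨hab, hφa, ?_⟩
    rintro ⟨x, e⟩ hx
    change φ _ = _
    cases e
    · rw [e2, _root_.map_inv, hφ x hx]
    · exact hφ x hx
  have K : Niel a b (!true) φ.symm.toMonoidHom := by
    refine ⟨hab, ?_, ?_⟩
    · change φ.symm (FreeGroup.of a) = FreeGroup.of a * FreeGroup.mk [(b, false)]
      rw [e2, MulEquiv.symm_apply_eq, _root_.map_mul, _root_.map_inv, hφa, hφ b hab.symm]
      group
    · rintro x hx
      change φ.symm _ = _
      rw [MulEquiv.symm_apply_eq]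
      exact (H.hx x hx).symm
  constructor
  · intro h
    have hr : FreeGroup.IsReduced (w.toWord ++ [(c, true)]) := h ▸ FreeGroup.isReduced_toWord
    rw [h]
    exact main_aux φ H K Φ hΦ (c, true) hca hcb w hr
  · intro h
    have hr : FreeGroup.IsReduced (w.toWord ++ [(c, false)]) := h ▸ FreeGroup.isReduced_toWord
    rw [h]
    exact main_aux φ H K Φ hΦ (c, false) hca hcb w hr
end
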